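/- Let H = (V,E) be a proper Eulerian hypergraph. Call H minimal if for every k ≥ 1 and every k-qubit Pauli-based magic assignment ᾱ of H, no two distinct vertices of V are mapped by ᾱ to the same observable, and no vertex is mapped to the identity operator. Call a V×V matrix M over ZMod 2 reduced if M has no zero row and no two identical rows. Then H is minimal if and only if every magic Gram matrix in the valid Gram space of H is reduced. -/

import Mathlib

open Matrix Finset

/-! ### Pauli matrices and observables -/

/-- The Pauli `X` matrix. -/
noncomputable def PX : Matrix (Fin 2) (Fin 2) ℂ := !![0, 1; 1, 0]

/-- The Pauli `Y` matrix. -/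
noncomputable def PY : Matrix (Fin 2) (Fin 2) ℂ := !![0, -Complex.I; Complex.I, 0]

/-- The Pauli `Z` matrix. -/
noncomputable def PZ : Matrix (Fin 2) (Fin 2) ℂ := !![1, 0; 0, -1]

/-- The Kronecker (tensor) product of `k` 2×2 matrices, realized as a matrix indexed by
`Fin k → Fin 2` (a type of cardinality `2^k`). -/
noncomputable def pauliTensor (k : ℕ) (P : Fin k → Matrix (Fin 2) (Fin 2) ℂ) :
    Matrix (Fin k → Fin 2) (Fin k → Fin 2) ℂ :=
  Matrix.of fun f g => ∏ i, P i (f i) (g i)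

/-- A `k`-qubit Pauli observable: `ε · (P₁ ⊗ ⋯ ⊗ P_k)` with `ε ∈ {1,-1}` and each
`P_i ∈ {I, X, Y, Z}`. -/
def IsPauliObservable {k : ℕ} (A : Matrix (Fin k → Fin 2) (Fin k → Fin 2) ℂ) : Prop :=
  ∃ (ε : ℂ) (P : Fin k → Matrix (Fin 2) (Fin 2) ℂ),
    (ε = 1 ∨ ε = -1) ∧ (∀ i, P i = 1 ∨ P i = PX ∨ P i = PY ∨ P i = PZ) ∧
    A = ε • pauliTensor k P

/-! ### Hypergraphs -/

/-- Product of the observables assigned to the vertices of a hyperedge (taken in increasing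
order of the vertices; for commuting observables this is the product in any order). -/
noncomputable def edgeProd {V n : Type*} [LinearOrder V] [Fintype n] [DecidableEq n]
    (α : V → Matrix n n ℂ) (e : Finset V) : Matrix n n ℂ :=
  ((e.sort (· ≤ ·)).map α).prod

/-- A proper Eulerian hypergraph: each vertex lies in an even number of hyperedges, there are
no isolated vertices, no empty hyperedges, and all hyperedges are distinct. -/
def ProperEulerian {V E : Type*} [DecidableEq V] [Fintype E] (edge : E → Finset V) : Prop :=
  (∀ v : V, Even (Finset.univ.filter (fun e : E => v ∈ edge e)).card) ∧
  (∀ v : V, ∃ e : E, v ∈ edge e) ∧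
  (∀ e : E, (edge e).Nonempty) ∧
  Function.Injective edge

/-- A valid Gram matrix for a hypergraph. -/
def IsValidGram {V E : Type*} (edge : E → Finset V) (M : Matrix V V (ZMod 2)) : Prop :=
  M.IsSymm ∧ (∀ v, M v v = 0) ∧
  (∀ e : E, ∀ u ∈ edge e, ∀ v ∈ edge e, M u v = 0) ∧
  (∀ e : E, ∀ v : V, ∑ u ∈ edge e, M u v = 0)

/-- The concatenated list of vertices of the hyperedges, each hyperedge's vertices listed in
increasing order, hyperedges enumerated by the list `le`. -/
def vertexList {V E : Type*} [LinearOrder V] (edge : E → Finset V) (le : List E) : List V :=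
  (le.map fun e => (edge e).sort (· ≤ ·)).flatten

/-- The inversion sum `s(M) = ∑_{i<j, L_i > L_j} M_{L_i, L_j}`. -/
def inversionSum {V : Type*} [LinearOrder V] (M : Matrix V V (ZMod 2)) (L : List V) : ZMod 2 :=
  ∑ i : Fin L.length, ∑ j : Fin L.length,
    if i < j ∧ L.get j < L.get i then M (L.get i) (L.get j) else 0

/-- A magic Gram matrix: a valid Gram matrix with inversion sum 1. -/
def MagicGram {V E : Type*} [LinearOrder V] (edge : E → Finset V) (le : List E)
    (M : Matrix V V (ZMod 2)) : Prop :=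
  IsValidGram edge M ∧ inversionSum M (vertexList edge le) = 1

/-- A `k`-qubit Pauli-based magic assignment of a hypergraph. -/
def IsPauliMagicAssignment {V E : Type*} [LinearOrder V] [Fintype E] (k : ℕ)
    (edge : E → Finset V) (α : V → Matrix (Fin k → Fin 2) (Fin k → Fin 2) ℂ) : Prop :=
  (∀ v, IsPauliObservable (α v)) ∧
  (∀ e : E, ∀ u ∈ edge e, ∀ w ∈ edge e, Commute (α u) (α w)) ∧
  (∀ e : E, edgeProd α (edge e) = 1 ∨ edgeProd α (edge e) = -1) ∧
  Odd (Nat.card {e : E // edgeProd α (edge e) = -1})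

/-- A magic assignment of a hypergraph by Hermitian matrices squaring to the identity. -/
def IsMagicAssignment {V E n : Type*} [LinearOrder V] [Fintype E] [Fintype n] [DecidableEq n]
    (edge : E → Finset V) (α : V → Matrix n n ℂ) : Prop :=
  (∀ v, (α v).IsHermitian) ∧ (∀ v, α v * α v = 1) ∧
  (∀ e : E, ∀ u ∈ edge e, ∀ w ∈ edge e, Commute (α u) (α w)) ∧
  (∀ e : E, edgeProd α (edge e) = 1 ∨ edgeProd α (edge e) = -1) ∧
  Odd (Nat.card {e : E // edgeProd α (edge e) = -1})

open scoped Classical in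
/-- The sign vector `c(α) ∈ (ZMod 2)^E` of an assignment: `0` on hyperedges with product `+I`,
`1` on the others. -/
noncomputable def cvec {V E n : Type*} [LinearOrder V] [Fintype E] [Fintype n] [DecidableEq n]
    (edge : E → Finset V) (α : V → Matrix n n ℂ) : E → ZMod 2 :=
  fun e => if edgeProd α (edge e) = 1 then 0 else 1

/-- The incidence matrix of a hypergraph. -/
def incMatrix {V E : Type*} [DecidableEq V] (edge : E → Finset V) : Matrix V E (ZMod 2) :=
  Matrix.of fun v e => if v ∈ edge e then 1 else 0

/-- Hamming weight of a vector over `ZMod 2`. -/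
def hWeight {E : Type*} [Fintype E] (y : E → ZMod 2) : ℕ :=
  (Finset.univ.filter fun e => y e ≠ 0).card

/-- The symplectic product on `(ZMod 2)^{2k}` (coordinates indexed by `Fin k ⊕ Fin k`). -/
def sympl (k : ℕ) (s t : Fin k ⊕ Fin k → ZMod 2) : ZMod 2 :=
  ∑ i : Fin k, (s (Sum.inl i) * t (Sum.inr i) + s (Sum.inr i) * t (Sum.inl i))

/-! ### Helper lemmas -/

section Helpers

/-- The sign attached to an element of `ZMod 2`. -/
noncomputable def sg (x : ZMod 2) : ℂ := if x = 0 then 1 else -1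

lemma zmod2_cases (a : ZMod 2) : a = 0 ∨ a = 1 := by
  fin_cases a
  · left; rfl
  · right; rfl

lemma sg_zero : sg 0 = 1 := by simp [sg]

lemma sg_add (x y : ZMod 2) : sg (x + y) = sg x * sg y := by
  have h : (1 + 1 : ZMod 2) = 0 := by decide
  rcases zmod2_cases x with rfl | rfl <;> rcases zmod2_cases y with rfl | rfl <;> simp [sg, h]

lemma sg_sq (x : ZMod 2) : sg x * sg x = 1 := by
  unfold sg; split_ifs <;> norm_num

lemma sg_eq_one {x : ZMod 2} (h : sg x = 1) : x = 0 := by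
  unfold sg at h
  split_ifs at h with h0
  · exact h0
  · norm_num at h

lemma sg_sum {ι : Type*} (s : Finset ι) (f : ι → ZMod 2) :
    sg (∑ i ∈ s, f i) = ∏ i ∈ s, sg (f i) := by
  classical
  induction s using Finset.induction_on with
  | empty => simp [sg_zero]
  | insert a s ha ih => rw [Finset.sum_insert ha, Finset.prod_insert ha, sg_add, ih]

/-- One-qubit Pauli matrix attached to a pair of bits. -/
noncomputable def sig (a b : ZMod 2) : Matrix (Fin 2) (Fin 2) ℂ :=
  if a = 0 then (if b = 0 then 1 else PZ) else (if b = 0 then PX else PY)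

lemma sig_mem (a b : ZMod 2) : sig a b = 1 ∨ sig a b = PX ∨ sig a b = PY ∨ sig a b = PZ := by
  unfold sig; split_ifs <;> simp

lemma sig_surj {P : Matrix (Fin 2) (Fin 2) ℂ} (h : P = 1 ∨ P = PX ∨ P = PY ∨ P = PZ) :
    ∃ a b, P = sig a b := by
  rcases h with h | h | h | h
  · exact ⟨0, 0, by simp [sig, h]⟩
  · exact ⟨1, 0, by simp [sig, h]⟩
  · exact ⟨1, 1, by simp [sig, h]⟩
  · exact ⟨0, 1, by simp [sig, h]⟩

lemma sig_sq (a b : ZMod 2) : sig a b * sig a b = 1 := by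
  unfold sig
  split_ifs <;> ext i j <;> fin_cases i <;> fin_cases j <;>
    simp [PX, PY, PZ, Matrix.mul_apply, Fin.sum_univ_two]

lemma sig_comm (a b c d : ZMod 2) :
    sig a b * sig c d = sg (a * d + b * c) • (sig c d * sig a b) := by
  have h : (1 + 1 : ZMod 2) = 0 := by decide
  rcases zmod2_cases a with rfl | rfl <;> rcases zmod2_cases b with rfl | rfl <;>
  rcases zmod2_cases c with rfl | rfl <;> rcases zmod2_cases d with rfl | rfl <;>
  ext i j <;> fin_cases i <;> fin_cases j <;>
    simp [sig, sg, h, PX, PY, PZ, Matrix.mul_apply, Fin.sum_univ_two]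

lemma sig_mul (a b c d : ZMod 2) :
    ∃ t : ℂ, sig a b * sig c d = t • sig (a + c) (b + d) := by
  have h : (1 + 1 : ZMod 2) = 0 := by decide
  rcases zmod2_cases a with rfl | rfl <;> rcases zmod2_cases b with rfl | rfl <;>
  rcases zmod2_cases c with rfl | rfl <;> rcases zmod2_cases d with rfl | rfl <;>
  first
  | (refine ⟨1, ?_⟩
     ext i j
     fin_cases i <;> fin_cases j <;>
       simp [sig, h, PX, PY, PZ, Matrix.mul_apply, Fin.sum_univ_two]
     done)
  | (refine ⟨Complex.I, ?_⟩
     ext i j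
     fin_cases i <;> fin_cases j <;>
       simp [sig, h, PX, PY, PZ, Matrix.mul_apply, Fin.sum_univ_two]
     done)
  | (refine ⟨-Complex.I, ?_⟩
     ext i j
     fin_cases i <;> fin_cases j <;>
       simp [sig, h, PX, PY, PZ, Matrix.mul_apply, Fin.sum_univ_two]
     done)

lemma pauliTensor_mul (k : ℕ) (P Q : Fin k → Matrix (Fin 2) (Fin 2) ℂ) :
    pauliTensor k P * pauliTensor k Q = pauliTensor k (fun i => P i * Q i) := by
  ext f g
  simp only [pauliTensor, Matrix.mul_apply, Matrix.of_apply]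
  rw [Finset.prod_univ_sum, Fintype.piFinset_univ]
  simp only [Finset.prod_mul_distrib]

lemma pauliTensor_smul (k : ℕ) (c : Fin k → ℂ) (P : Fin k → Matrix (Fin 2) (Fin 2) ℂ) :
    pauliTensor k (fun i => c i • P i) = (∏ i, c i) • pauliTensor k P := by
  ext f g
  simp [pauliTensor, Finset.prod_mul_distrib]

lemma pauliTensor_one (k : ℕ) : pauliTensor k (fun _ => 1) = 1 := by
  ext f g
  simp only [pauliTensor, Matrix.of_apply, Matrix.one_apply]
  by_cases h : f = g
  · simp [h]
  · rw [if_neg h]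
    obtain ⟨i, hi⟩ := Function.ne_iff.mp h
    exact Finset.prod_eq_zero (Finset.mem_univ i) (if_neg hi)

/-- The `k`-qubit Pauli operator attached to a symplectic vector. -/
noncomputable def pT (k : ℕ) (x z : Fin k → ZMod 2) :
    Matrix (Fin k → Fin 2) (Fin k → Fin 2) ℂ :=
  pauliTensor k (fun i => sig (x i) (z i))

lemma pT_zero (k : ℕ) : pT k 0 0 = 1 := by
  rw [← pauliTensor_one]
  simp [pT, sig]

lemma pT_sq (k : ℕ) (x z : Fin k → ZMod 2) : pT k x z * pT k x z = 1 := by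
  rw [pT, pauliTensor_mul, ← pauliTensor_one]
  simp only [sig_sq]

lemma pT_comm (k : ℕ) (x z x' z' : Fin k → ZMod 2) :
    pT k x z * pT k x' z' = sg (∑ i, (x i * z' i + z i * x' i)) • (pT k x' z' * pT k x z) := by
  rw [pT, pT, pauliTensor_mul, pauliTensor_mul, sg_sum, ← pauliTensor_smul]
  congr 1
  funext i
  exact sig_comm _ _ _ _

lemma pT_mul (k : ℕ) (x z x' z' : Fin k → ZMod 2) :
    ∃ t : ℂ, pT k x z * pT k x' z' = t • pT k (x + x') (z + z') := by
  choose t ht using fun i => sig_mul (x i) (z i) (x' i) (z' i)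
  refine ⟨∏ i, t i, ?_⟩
  rw [pT, pT, pauliTensor_mul, pT, ← pauliTensor_smul]
  congr 1
  funext i
  exact ht i

lemma pT_list_prod (k : ℕ) {V : Type*} (x z : V → Fin k → ZMod 2) (l : List V) :
    ∃ t : ℂ, (l.map fun u => pT k (x u) (z u)).prod =
      t • pT k (l.map x).sum (l.map z).sum := by
  induction l with
  | nil => exact ⟨1, by simp [pT_zero]⟩
  | cons a l ih =>
    obtain ⟨t, ht⟩ := ih
    obtain ⟨t', ht'⟩ := pT_mul k (x a) (z a) (l.map x).sum (l.map z).sum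
    refine ⟨t * t', ?_⟩
    simp only [List.map_cons, List.prod_cons, List.sum_cons]
    rw [ht, mul_smul_comm, ht', smul_smul]

lemma obs_form {k : ℕ} {A : Matrix (Fin k → Fin 2) (Fin k → Fin 2) ℂ}
    (h : IsPauliObservable A) :
    ∃ (ε : ℂ) (x z : Fin k → ZMod 2), ε * ε = 1 ∧ A = ε • pT k x z := by
  obtain ⟨ε, P, hε, hP, rfl⟩ := h
  choose x z hxz using fun i => sig_surj (hP i)
  refine ⟨ε, x, z, ?_, ?_⟩
  · rcases hε with rfl | rfl <;> norm_num
  · rw [pT]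
    congr 2
    funext i
    exact hxz i

lemma obs_sq {k : ℕ} {A : Matrix (Fin k → Fin 2) (Fin k → Fin 2) ℂ}
    (h : IsPauliObservable A) : A * A = 1 := by
  obtain ⟨ε, x, z, hε, rfl⟩ := obs_form h
  rw [smul_mul_smul_comm, hε, pT_sq, one_smul]

lemma obs_comm {k : ℕ} {A B : Matrix (Fin k → Fin 2) (Fin k → Fin 2) ℂ}
    (hA : IsPauliObservable A) (hB : IsPauliObservable B) :
    A * B = B * A ∨ A * B = -(B * A) := by
  obtain ⟨ε, x, z, -, rfl⟩ := obs_form hA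
  obtain ⟨δ, x', z', -, rfl⟩ := obs_form hB
  rw [smul_mul_smul_comm, smul_mul_smul_comm, pT_comm, mul_comm δ ε]
  unfold sg
  split_ifs
  · left; simp
  · right; simp

/-! ### Sorting signs -/

section Sorting

variable {V : Type*} [LinearOrder V] {R : Type*} [Ring R] [Algebra ℂ R]

/-- The inversion contribution of a first letter. -/
def headSum (M : Matrix V V (ZMod 2)) (a : V) (L : List V) : ZMod 2 :=
  (L.map fun b => if b < a then M a b else 0).sum

lemma inversionSum_cons (M : Matrix V V (ZMod 2)) (a : V) (L : List V) :
    inversionSum M (a :: L) = headSum M a L + inversionSum M L := by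
  unfold inversionSum headSum
  change (∑ i : Fin (L.length + 1), ∑ j : Fin (L.length + 1), _) = _
  rw [Fin.sum_univ_succ]
  congr 1
  · rw [Fin.sum_univ_succ]
    simp [Fin.succ_pos]
    rw [← Fin.sum_univ_fun_getElem]
  · refine Finset.sum_congr rfl fun i _ => ?_
    rw [Fin.sum_univ_succ]
    simp

lemma headSum_perm (M : Matrix V V (ZMod 2)) (a : V) {L L' : List V} (h : L.Perm L') :
    headSum M a L = headSum M a L' :=
  (h.map _).sum_eq

lemma insert_prod (α : V → R) (M : Matrix V V (ZMod 2))
    (hc : ∀ u v, α u * α v = sg (M u v) • (α v * α u)) (a : V) (l : List V)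
    (hl : l.Pairwise (· ≤ ·)) :
    α a * (l.map α).prod = sg (headSum M a l) • ((l.orderedInsert (· ≤ ·) a).map α).prod := by
  induction l with
  | nil => simp [headSum, sg_zero]
  | cons b l ih =>
    rw [List.pairwise_cons] at hl
    by_cases hab : a ≤ b
    · have h0 : headSum M a (b :: l) = 0 := by
        unfold headSum
        apply List.sum_eq_zero
        intro y hy
        obtain ⟨c, hc', rfl⟩ := List.mem_map.mp hy
        rw [if_neg]
        rcases List.mem_cons.mp hc' with rfl | hc'
        · exact not_lt.mpr hab
        · exact not_lt.mpr (hab.trans (hl.1 c hc'))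
      rw [h0, sg_zero, one_smul, List.orderedInsert_cons, if_pos hab]
      simp
    · have h1 : headSum M a (b :: l) = M a b + headSum M a l := by
        simp [headSum, not_le.mp hab]
      rw [h1, List.orderedInsert_cons, if_neg hab, sg_add]
      simp only [List.map_cons, List.prod_cons]
      rw [← mul_assoc, hc, smul_mul_assoc, mul_assoc, ih hl.2, mul_smul_comm, smul_smul]

lemma sort_prod (α : V → R) (M : Matrix V V (ZMod 2))
    (hc : ∀ u v, α u * α v = sg (M u v) • (α v * α u)) (l : List V) :
    (l.map α).prod = sg (inversionSum M l) • ((l.insertionSort (· ≤ ·)).map α).prod := by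
  induction l with
  | nil => simp [inversionSum, sg_zero]
  | cons a l ih =>
    rw [inversionSum_cons, sg_add, List.map_cons, List.prod_cons, ih, mul_smul_comm,
      insert_prod α M hc a _ (List.pairwise_insertionSort _ l),
      headSum_perm M a (List.perm_insertionSort (· ≤ ·) l), smul_smul, mul_comm]
    rfl

lemma even_sorted_prod (α : V → R) (hs : ∀ v, α v * α v = 1) :
    ∀ (n : ℕ) (l : List V), l.length ≤ n → l.Pairwise (· ≤ ·) → (∀ v, Even (l.count v)) →
      (l.map α).prod = 1 := by
  intro n
  induction n with
  | zero =>
    intro l hl _ _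
    rw [List.length_eq_zero_iff.mp (Nat.le_zero.mp hl)]
    simp
  | succ n ih =>
    intro l hl hsort hev
    match l, hl, hsort, hev with
    | [], _, _, _ => simp
    | [a], _, _, hev => 
      have := hev a
      simp at this
    | a :: b :: l, hl, hsort, hev =>
      have hab : a = b := by
        by_contra hne
        have h1 := hev a
        rw [List.count_cons_self, List.count_cons_of_ne (Ne.symm hne)] at h1
        rw [List.pairwise_cons, List.pairwise_cons] at hsort
        have hmem : a ∈ l := by
          by_contra hn
          rw [List.count_eq_zero_of_not_mem hn] at h1
          simp at h1
        exact hne (le_antisymm (hsort.1 b (by simp)) (hsort.2.1 a hmem))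
      subst hab
      simp only [List.map_cons, List.prod_cons]
      rw [← mul_assoc, hs, one_mul]
      apply ih l
      · simp at hl; omega
      · rw [List.pairwise_cons, List.pairwise_cons] at hsort
        exact hsort.2.2
      · intro v
        have := hev v
        by_cases hv : a = v
        · subst hv
          rw [List.count_cons_self, List.count_cons_self] at this
          simpa [Nat.even_add_one] using this
        · rwa [List.count_cons_of_ne hv, List.count_cons_of_ne hv] at this

lemma even_prod (α : V → R) (M : Matrix V V (ZMod 2))
    (hc : ∀ u v, α u * α v = sg (M u v) • (α v * α u)) (hs : ∀ v, α v * α v = 1)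
    (l : List V) (hev : ∀ v, Even (l.count v)) :
    (l.map α).prod = sg (inversionSum M l) • (1 : R) := by
  rw [sort_prod α M hc, even_sorted_prod α hs _ _ le_rfl (List.pairwise_insertionSort _ l)]
  intro v
  rw [(List.perm_insertionSort (· ≤ ·) l).count_eq]
  exact hev v

lemma list_prod_mul (α : V → R) (M : Matrix V V (ZMod 2))
    (hc : ∀ u v, α u * α v = sg (M u v) • (α v * α u)) (l : List V) (v : V) :
    (l.map α).prod * α v = sg ((l.map fun u => M u v).sum) • (α v * (l.map α).prod) := by
  induction l with
  | nil => simp [sg_zero]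
  | cons a l ih =>
    simp only [List.map_cons, List.prod_cons, List.sum_cons]
    rw [mul_assoc, ih, mul_smul_comm, ← mul_assoc, hc, sg_add, smul_mul_assoc, smul_smul,
      mul_assoc, mul_comm (sg (M a v))]

lemma list_prod_sq (α : V → R) (hs : ∀ v, α v * α v = 1) (l : List V)
    (hcm : ∀ u ∈ l, ∀ v ∈ l, Commute (α u) (α v)) :
    (l.map α).prod * (l.map α).prod = 1 := by
  induction l with
  | nil => simp
  | cons a l ih =>
    have h1 : Commute (α a) (l.map α).prod := by
      apply Commute.list_prod_right
      intro y hy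
      obtain ⟨c, hc', rfl⟩ := List.mem_map.mp hy
      exact hcm _ (by simp) _ (by simp [hc'])
    have h2 := ih fun u hu v hv => hcm u (by simp [hu]) v (by simp [hv])
    simp only [List.map_cons, List.prod_cons]
    calc α a * (l.map α).prod * (α a * (l.map α).prod)
        = α a * ((l.map α).prod * α a) * (l.map α).prod := by simp only [mul_assoc]
      _ = (α a * α a) * ((l.map α).prod * (l.map α).prod) := by
          rw [← h1.eq]; simp only [mul_assoc]
      _ = 1 := by rw [hs, h2, one_mul]

end Sorting

section Key

variable {V E : Type*} [LinearOrder V] [Fintype E]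

lemma count_vertexList (edge : E → Finset V) (le : List E) (v : V) :
    (vertexList edge le).count v = le.countP (fun e => decide (v ∈ edge e)) := by
  induction le with
  | nil => simp [vertexList]
  | cons a l ih =>
    have : vertexList edge (a :: l) = (edge a).sort (· ≤ ·) ++ vertexList edge l := by
      simp [vertexList]
    rw [this, List.count_append, ih, List.countP_cons, add_comm]
    congr 1
    rw [List.Nodup.count (Finset.sort_nodup _ _)]
    simp

lemma even_count (edge : E → Finset V) (hH : ProperEulerian edge)
    (le : List E) (hnd : le.Nodup) (hmem : ∀ e : E, e ∈ le) (v : V) :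
    Even ((vertexList edge le).count v) := by
  classical
  rw [count_vertexList, List.countP_eq_length_filter]
  have h := hH.1 v
  convert h using 1
  rw [← List.toFinset_card_of_nodup (hnd.filter _)]
  congr 1
  ext e
  simp [hmem]

lemma prod_vertexList {n : Type*} [Fintype n] [DecidableEq n] (edge : E → Finset V)
    (α : V → Matrix n n ℂ) (le : List E) :
    ((vertexList edge le).map α).prod = (le.map fun e => edgeProd α (edge e)).prod := by
  induction le with
  | nil => simp [vertexList]
  | cons a l ih =>
    have : vertexList edge (a :: l) = (edge a).sort (· ≤ ·) ++ vertexList edge l := by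
      simp [vertexList]
    rw [this, List.map_append, List.prod_append, ih, List.map_cons, List.prod_cons]
    rfl

lemma prod_signs {R : Type*} [Ring R] (f : E → R) [∀ e, Decidable (f e = -1)] (hf : ∀ e, f e = 1 ∨ f e = -1)
    (hne : (1 : R) ≠ -1) (l : List E) :
    (l.map f).prod = (-1) ^ (l.countP fun e => decide (f e = -1)) := by
  induction l with
  | nil => simp
  | cons a l ih =>
    rw [List.map_cons, List.prod_cons, ih, List.countP_cons]
    rcases hf a with h | h
    · simp [h, hne]
    · simp [h, pow_succ]

lemma key {k : ℕ} (edge : E → Finset V) (hH : ProperEulerian edge)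
    (le : List E) (hnd : le.Nodup) (hmem : ∀ e : E, e ∈ le)
    (α : V → Matrix (Fin k → Fin 2) (Fin k → Fin 2) ℂ) (M : Matrix V V (ZMod 2))
    (hc : ∀ u v, α u * α v = sg (M u v) • (α v * α u)) (hs : ∀ v, α v * α v = 1)
    (hp : ∀ e : E, edgeProd α (edge e) = 1 ∨ edgeProd α (edge e) = -1) :
    Odd (Nat.card {e : E // edgeProd α (edge e) = -1}) ↔
      inversionSum M (vertexList edge le) = 1 := by
  classical
  have hne : (1 : Matrix (Fin k → Fin 2) (Fin k → Fin 2) ℂ) ≠ -1 := by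
    intro h
    have h2 := congrFun (congrFun h 0) 0
    simp only [Matrix.neg_apply, Matrix.one_apply_eq] at h2
    norm_num at h2
  have h1 := even_prod α M hc hs _ (even_count edge hH le hnd hmem)
  rw [prod_vertexList, prod_signs _ hp hne] at h1
  have h3 : Nat.card {e : E // edgeProd α (edge e) = -1} =
      le.countP fun e => decide (edgeProd α (edge e) = -1) := by
    rw [Nat.card_eq_fintype_card, Fintype.card_subtype, List.countP_eq_length_filter,
      ← List.toFinset_card_of_nodup (hnd.filter _)]
    congr 1
    ext e
    simp [hmem]
  rw [h3]
  rcases zmod2_cases (inversionSum M (vertexList edge le)) with h0 | h0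
  · rw [h0, sg_zero, one_smul] at h1
    rw [h0]
    constructor
    · intro ho
      rw [ho.neg_one_pow] at h1
      exact absurd h1.symm hne
    · intro h; exact absurd h (by decide)
  · rw [h0] at h1 ⊢
    simp only [iff_true]
    by_contra ho
    rw [Nat.not_odd_iff_even] at ho
    rw [ho.neg_one_pow] at h1
    apply hne
    refine h1.trans ?_
    simp [sg]

end Key

lemma gen_inverse {V : Type*} [Fintype V] [DecidableEq V] (M : Matrix V V (ZMod 2)) :
    ∃ g : (V → ZMod 2) →ₗ[ZMod 2] (V → ZMod 2), ∀ x, M *ᵥ g (M *ᵥ x) = M *ᵥ x := by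
  obtain ⟨g, hg⟩ := LinearMap.exists_rightInverse_of_surjective M.mulVecLin.rangeRestrict
    (LinearMap.range_rangeRestrict _)
  obtain ⟨g', hg'⟩ := LinearMap.exists_extend g
  refine ⟨g', fun x => ?_⟩
  have h1 : g' (M *ᵥ x) = g (M.mulVecLin.rangeRestrict x) := by
    rw [← hg']; rfl
  rw [h1]
  have h2 := congrArg Subtype.val (LinearMap.congr_fun hg (M.mulVecLin.rangeRestrict x))
  exact h2

lemma symplectic_realization {V : Type*} [Fintype V] [LinearOrder V] (M : Matrix V V (ZMod 2))
    (hsym : M.IsSymm) (hd : ∀ v, M v v = 0) :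
    ∃ X Z : (V → ZMod 2) →ₗ[ZMod 2] (V → ZMod 2), ∀ u v,
      ∑ i, (X (M u) i * Z (M v) i + Z (M u) i * X (M v) i) = M u v := by
  obtain ⟨g, hg⟩ := gen_inverse M
  let A : Matrix V V (ZMod 2) := Matrix.of fun u v => if u < v then M u v else 0
  have hA : M = Aᵀ + A := by
    ext u v
    simp only [A, Matrix.add_apply, Matrix.transpose_apply, Matrix.of_apply]
    rcases lt_trichotomy u v with h | h | h
    · simp [h, h.not_gt]
    · subst h; simp [hd]
    · simp [h, h.not_gt, hsym.apply]
  have hq : ∀ u, M *ᵥ g (M u) = M u := by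
    intro u
    have h1 : M u = M *ᵥ Pi.single u 1 := by
      ext v
      simp [hsym.apply]
    rw [h1]; exact hg _
  refine ⟨A.mulVecLin ∘ₗ g, g, fun u v => ?_⟩
  change ∑ i, ((A *ᵥ g (M u)) i * g (M v) i + g (M u) i * (A *ᵥ g (M v)) i) = M u v
  rw [Finset.sum_add_distrib]
  change (A *ᵥ g (M u)) ⬝ᵥ g (M v) + g (M u) ⬝ᵥ (A *ᵥ g (M v)) = M u v
  have h2 : (A *ᵥ g (M u)) ⬝ᵥ g (M v) = g (M u) ⬝ᵥ (Aᵀ *ᵥ g (M v)) := by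
    rw [Matrix.dotProduct_mulVec, Matrix.vecMul_transpose]
  rw [h2, ← dotProduct_add, ← Matrix.add_mulVec, ← hA, hq v]
  have h3 : g (M u) ⬝ᵥ M v = (M *ᵥ g (M u)) v := by
    rw [dotProduct_comm]; rfl
  rw [h3, hq]

lemma forward_gram {V E : Type*} [LinearOrder V] [Fintype E]
    (edge : E → Finset V) (hH : ProperEulerian edge)
    (le : List E) (hnd : le.Nodup) (hmem : ∀ e : E, e ∈ le) {k : ℕ}
    (α : V → Matrix (Fin k → Fin 2) (Fin k → Fin 2) ℂ) (hα : IsPauliMagicAssignment k edge α) :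
    ∃ M : Matrix V V (ZMod 2), MagicGram edge le M ∧ (∀ u v, α u = α v → M u = M v) ∧
      (∀ u, α u = 1 → M u = 0) := by
  classical
  obtain ⟨hobs, hcm, hp, hodd⟩ := hα
  let M : Matrix V V (ZMod 2) := Matrix.of fun u v => if Commute (α u) (α v) then 0 else 1
  have hM : ∀ u v, M u v = if Commute (α u) (α v) then 0 else 1 := fun _ _ => rfl
  have hs : ∀ v, α v * α v = 1 := fun v => obs_sq (hobs v)
  have hc : ∀ u v, α u * α v = sg (M u v) • (α v * α u) := by
    intro u v
    rw [hM]
    by_cases h : Commute (α u) (α v)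
    · rw [if_pos h, sg_zero, one_smul, h.eq]
    · rw [if_neg h]
      rcases obs_comm (hobs u) (hobs v) with h' | h'
      · exact absurd h' h
      · rw [h']; simp [sg]
  refine ⟨M, ⟨⟨?_, ?_, ?_, ?_⟩, ?_⟩, ?_, ?_⟩
  · ext u v
    simp only [Matrix.transpose_apply, hM, Commute.symm_iff (a := α u)]
  · intro v
    rw [hM, if_pos (Commute.refl _)]
  · intro e u hu v hv
    rw [hM, if_pos (hcm e u hu v hv)]
  · intro e v
    have h := list_prod_mul α M hc ((edge e).sort (· ≤ ·)) v
    have hsum : (((edge e).sort (· ≤ ·)).map fun u => M u v).sum = ∑ u ∈ edge e, M u v := by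
      rw [← List.sum_toFinset _ (Finset.sort_nodup _ _), Finset.sort_toFinset]
    rw [hsum] at h
    change edgeProd α (edge e) * α v = _ • (α v * edgeProd α (edge e)) at h
    apply sg_eq_one
    have h2 : α v = sg (∑ u ∈ edge e, M u v) • α v := by
      rcases hp e with h' | h'
      · rw [h'] at h; simpa using h
      · rw [h'] at h; simpa using h
    have h3 : (1 : Matrix (Fin k → Fin 2) (Fin k → Fin 2) ℂ) =
        sg (∑ u ∈ edge e, M u v) • 1 := by
      have := congrArg (· * α v) h2
      simpa only [smul_mul_assoc, hs] using this
    have h4 := congrFun (congrFun h3 0) 0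
    simp only [Matrix.smul_apply, Matrix.one_apply_eq, smul_eq_mul, mul_one] at h4
    exact h4.symm
  · exact (key edge hH le hnd hmem α M hc hs hp).mp hodd
  · intro u v h
    ext w
    rw [hM, hM, h]
  · intro u h
    ext w
    rw [hM, h, if_pos (Commute.one_left _)]
    rfl

lemma backward_assign {V E : Type*} [Fintype V] [LinearOrder V] [Fintype E]
    (edge : E → Finset V) (hH : ProperEulerian edge)
    (le : List E) (hnd : le.Nodup) (hmem : ∀ e : E, e ∈ le)
    (M : Matrix V V (ZMod 2)) (hM : MagicGram edge le M) :
    ∃ α : V → Matrix (Fin (Fintype.card V) → Fin 2) (Fin (Fintype.card V) → Fin 2) ℂ,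
      IsPauliMagicAssignment (Fintype.card V) edge α ∧ (∀ u v, M u = M v → α u = α v) ∧
      (∀ u, M u = 0 → α u = 1) := by
  obtain ⟨⟨hsym, hd, hcm, hsum⟩, hinv⟩ := hM
  obtain ⟨X, Z, hXZ⟩ := symplectic_realization M hsym hd
  let φ : Fin (Fintype.card V) ≃ V := (Fintype.equivFin V).symm
  let x : V → Fin (Fintype.card V) → ZMod 2 := fun u i => X (M u) (φ i)
  let z : V → Fin (Fintype.card V) → ZMod 2 := fun u i => Z (M u) (φ i)
  let α : V → Matrix (Fin (Fintype.card V) → Fin 2) (Fin (Fintype.card V) → Fin 2) ℂ :=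
    fun u => pT _ (x u) (z u)
  have hs : ∀ v, α v * α v = 1 := fun v => pT_sq _ _ _
  have hc : ∀ u v, α u * α v = sg (M u v) • (α v * α u) := by
    intro u v
    have h1 : M u v = ∑ i, (x u i * z v i + z u i * x v i) := by
      rw [← hXZ u v]
      exact (Equiv.sum_comp φ
        (fun i => X (M u) i * Z (M v) i + Z (M u) i * X (M v) i)).symm
    rw [h1]
    exact pT_comm _ _ _ _ _
  have hcomm : ∀ e : E, ∀ u ∈ edge e, ∀ w ∈ edge e, Commute (α u) (α w) := by
    intro e u hu w hw
    have := hc u w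
    rw [hcm e u hu w hw, sg_zero, one_smul] at this
    exact this
  let r : V → V → ZMod 2 := fun u v => M u v
  have hrow : ∀ e : E, ∑ u ∈ edge e, r u = 0 := by
    intro e
    ext v
    rw [Finset.sum_apply]
    exact hsum e v
  have hp : ∀ e : E, edgeProd α (edge e) = 1 ∨ edgeProd α (edge e) = -1 := by
    intro e
    obtain ⟨t, ht⟩ := pT_list_prod _ x z ((edge e).sort (· ≤ ·))
    have hx : (((edge e).sort (· ≤ ·)).map x).sum = 0 := by
      rw [← List.sum_toFinset _ (Finset.sort_nodup _ _), Finset.sort_toFinset]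
      ext i
      have h := congrFun (congrArg X (hrow e)) (φ i)
      rw [map_sum, map_zero] at h
      rw [Finset.sum_apply] at h ⊢
      exact h
    have hz : (((edge e).sort (· ≤ ·)).map z).sum = 0 := by
      rw [← List.sum_toFinset _ (Finset.sort_nodup _ _), Finset.sort_toFinset]
      ext i
      have h := congrFun (congrArg Z (hrow e)) (φ i)
      rw [map_sum, map_zero] at h
      rw [Finset.sum_apply] at h ⊢
      exact h
    rw [hx, hz, pT_zero] at ht
    have hsq := list_prod_sq α hs ((edge e).sort (· ≤ ·))
      (fun u hu v hv => hcomm e u (by simpa using hu) v (by simpa using hv))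
    change edgeProd α (edge e) = _ at ht
    change edgeProd α (edge e) * edgeProd α (edge e) = 1 at hsq
    rw [ht, smul_mul_smul_comm, one_mul] at hsq
    have h4 := congrFun (congrFun hsq 0) 0
    simp only [Matrix.smul_apply, Matrix.one_apply_eq, smul_eq_mul, mul_one] at h4
    rw [ht]
    rcases mul_self_eq_one_iff.mp h4 with h | h
    · left; simp [h]
    · right; simp [h]
  refine ⟨α, ⟨?_, hcomm, hp, (key edge hH le hnd hmem α M hc hs hp).mpr hinv⟩, ?_, ?_⟩
  · intro v
    exact ⟨1, fun i => sig (x v i) (z v i), Or.inl rfl, fun i => sig_mem _ _, by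
      rw [one_smul]; rfl⟩
  · intro u v h
    simp only [α, x, z, h]
  · intro u h
    simp only [α, x, z, h, map_zero]
    exact pT_zero _

end Helpers

/-- A proper Eulerian hypergraph is minimal (no Pauli-based magic assignment
repeats an observable or uses the identity) iff every magic Gram matrix in its valid Gram space
is reduced (no zero row, no two identical rows). -/
theorem stmt5 {V E : Type*} [Fintype V] [LinearOrder V] [Fintype E]
    (edge : E → Finset V) (hH : ProperEulerian edge)
    (le : List E) (hnd : le.Nodup) (hmem : ∀ e : E, e ∈ le) :
    (∀ k : ℕ, 1 ≤ k → ∀ α : V → Matrix (Fin k → Fin 2) (Fin k → Fin 2) ℂ,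
        IsPauliMagicAssignment k edge α →
          (∀ u v : V, u ≠ v → α u ≠ α v) ∧ (∀ v : V, α v ≠ 1)) ↔
      (∀ M : Matrix V V (ZMod 2), MagicGram edge le M →
          (∀ u : V, M u ≠ 0) ∧ (∀ u v : V, M u = M v → u = v)) := by
  constructor
  · intro h M hM
    obtain ⟨α, hα, h1, h2⟩ := backward_assign edge hH le hnd hmem M hM
    have hk : ∀ _ : V, 1 ≤ Fintype.card V := fun u => Fintype.card_pos_iff.mpr ⟨u⟩
    refine ⟨fun u hu => ?_, fun u v huv => ?_⟩
    · exact (h _ (hk u) α hα).2 u (h2 u hu)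
    · by_contra hne
      exact (h _ (hk u) α hα).1 u v hne (h1 u v huv)
  · intro h k _ α hα
    obtain ⟨M, hM, h1, h2⟩ := forward_gram edge hH le hnd hmem α hα
    refine ⟨fun u v hne huv => hne ((h M hM).2 u v (h1 u v huv)), fun v hv => ?_⟩
    exact (h M hM).1 v (h2 v hv)
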